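/- Let Γ be a finite connected k-regular simple graph (k ≥ 3) of diameter d on n vertices, and let δ = M(k,d) − n be its defect. Then every real eigenvalue λ of the adjacency matrix of Γ with λ ≠ k satisfies |G_{k,d}(λ)| ≤ δ. -/

import Mathlib

/-- The Moore bound `M(k,d) = 1 + k + k(k-1) + ... + k(k-1)^(d-1)`. -/
def mooreBound (k d : ℕ) : ℕ := 1 + ∑ i ∈ Finset.range d, k * (k - 1) ^ i

/-- The polynomials `G_{k,i}(x)` defined by `G_{k,0}(x) = 1`, `G_{k,1}(x) = x + 1`,
`G_{k,i+1}(x) = x·G_{k,i}(x) − (k−1)·G_{k,i−1}(x)`. -/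
def Gpol (k : ℕ) : ℕ → ℝ → ℝ
  | 0, _ => 1
  | 1, x => x + 1
  | (i + 2), x => x * Gpol k (i + 1) x - (k - 1 : ℝ) * Gpol k i x

/-!
Let `W d` be the matrix whose `(u, v)` entry counts the non-backtracking walks of length at most `d`
from `u` to `v`. In a `k`-regular graph with adjacency matrix `A` it satisfies
`W (d + 2) = A * W (d + 1) - (k - 1) • W d`, the recursion of `G_{k,d}`, so `W d` acts on a
`lam`-eigenvector of `A` as `G_{k,d}(lam)`. Its row sums are `M(k,d)`, and its entries are at least
`1` once the diameter is at most `d`, because geodesics do not backtrack. If `J` is the all-ones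
matrix, then `W d - J` is entrywise nonnegative with row sums `M(k,d) - n`, which therefore bound
its eigenvalues. An eigenvector with `lam ≠ k` is orthogonal to the constants, so `J` kills it and
`G_{k,d}(lam)` is an eigenvalue of `W d - J`.
-/

open Matrix

section LinearAlgebra

variable {R K m n p : Type*}

lemma one_le_matrix_mul_apply [Fintype n] [Semiring R] [PartialOrder R] [IsOrderedRing R]
    {M : Matrix m n R} {N : Matrix n p R} (hM : ∀ i j, 0 ≤ M i j) (hN : ∀ j l, 0 ≤ N j l)
    {i : m} {j : n} {l : p} (hij : 1 ≤ M i j) (hjl : 1 ≤ N j l) : 1 ≤ (M * N) i l :=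
  calc
    1 ≤ M i j * N j l := one_le_mul_of_one_le_of_one_le hij hjl
    _ ≤ (M * N) i l := Finset.single_le_sum (f := fun x ↦ M i x * N x l)
      (fun x _ ↦ mul_nonneg (hM i x) (hN x l)) (Finset.mem_univ j)

lemma matrix_mul_apply_nonneg [Fintype n] [Semiring R] [PartialOrder R] [IsOrderedRing R]
    {M : Matrix m n R} {N : Matrix n p R} (hM : ∀ i j, 0 ≤ M i j) (hN : ∀ j l, 0 ≤ N j l)
    (i : m) (l : p) : 0 ≤ (M * N) i l :=
  Finset.sum_nonneg fun j _ ↦ mul_nonneg (hM i j) (hN j l)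

lemma dotProduct_eq_zero_of_mulVec_of_vecMul [Fintype n] [CommRing R] [IsDomain R]
    {M : Matrix n n R} {f g : n → R} {a b : R} (hf : M *ᵥ f = a • f) (hg : g ᵥ* M = b • g)
    (hab : a ≠ b) : g ⬝ᵥ f = 0 := by
  have h : a * (g ⬝ᵥ f) = b * (g ⬝ᵥ f) := by
    rw [← smul_eq_mul, ← dotProduct_smul, ← hf, dotProduct_mulVec, hg, smul_dotProduct, smul_eq_mul]
  exact (mul_eq_mul_right_iff.1 h).resolve_left hab

lemma norm_le_of_mulVec_eq_smul_of_sum_norm_le [Fintype n] [NormedField K] {M : Matrix n n K}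
    {f : n → K} {a : K} {c : ℝ} (hf : M *ᵥ f = a • f) (hf₀ : f ≠ 0)
    (hM : ∀ i, ∑ j, ‖M i j‖ ≤ c) : ‖a‖ ≤ c := by
  classical
  have ha : Module.End.HasEigenvalue (toLin' M) a :=
    Module.End.hasEigenvalue_of_hasEigenvector
      (Module.End.hasEigenvector_iff.2 ⟨Module.End.mem_eigenspace_iff.2 hf, hf₀⟩)
  obtain ⟨i, hi⟩ := eigenvalue_mem_ball ha
  calc
    ‖a‖ ≤ ‖M i i‖ + ‖a - M i i‖ := norm_le_norm_add_norm_sub' a (M i i)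
    _ ≤ ‖M i i‖ + ∑ j ∈ Finset.univ.erase i, ‖M i j‖ := by
      gcongr
      exact mem_closedBall_iff_norm.1 hi
    _ = ∑ j, ‖M i j‖ := Finset.add_sum_erase _ (‖M i ·‖) (Finset.mem_univ i)
    _ ≤ c := hM i

end LinearAlgebra

lemma exists_adj_edist_eq_of_edist_eq_add_one {V : Type*} {G : SimpleGraph V} {u v : V} {n : ℕ}
    (h : G.edist u v = (n + 1 : ℕ)) : ∃ w, G.Adj u w ∧ G.edist w v = n := by
  obtain ⟨p, hp⟩ := SimpleGraph.exists_walk_of_edist_eq_coe h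
  cases p with
  | nil => simp at hp
  | @cons _ w _ huw q =>
    refine ⟨w, huw, le_antisymm ?_ ?_⟩
    · have hq : q.length = n := by simpa using hp
      exact hq ▸ G.edist_le q
    · have htri : G.edist u v ≤ G.edist u w + G.edist w v := G.edist_triangle
      rw [h, SimpleGraph.edist_eq_one_iff_adj.2 huw, Nat.cast_add_one, add_comm] at htri
      exact (ENat.add_le_add_iff_left ENat.one_ne_top).1 htri

lemma ediam_eq_natCast_of_diam_eq {V : Type*} [Finite V] {G : SimpleGraph V} {d : ℕ}
    (hconn : G.Connected) (hdiam : G.diam = d) : G.ediam = d := by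
  have := hconn.nonempty
  rw [← hdiam, SimpleGraph.diam,
    ENat.natCast_toNat (SimpleGraph.connected_iff_ediam_ne_top.1 hconn)]

lemma adjMatrix_mulVec_one (R : Type*) [NonAssocSemiring R] {V : Type*} [Fintype V]
    {G : SimpleGraph V} [DecidableRel G.Adj] {k : ℕ} (hreg : G.IsRegularOfDegree k) :
    G.adjMatrix R *ᵥ 1 = k • (1 : V → R) := by
  ext v
  simp [hreg.degree_eq]

section Nonbacktracking

variable (R : Type*) {V : Type*} [DecidableEq V] (G : SimpleGraph V)

section Definitions

variable [Zero R] [One R]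

/-- The vertex–dart incidence matrix recording the source of each dart. -/
def dartFstMatrix : Matrix V G.Dart R := of fun u a ↦ if a.fst = u then 1 else 0

/-- The dart–vertex incidence matrix recording the target of each dart. -/
def dartSndMatrix : Matrix G.Dart V R := of fun a v ↦ if a.snd = v then 1 else 0

/-- The permutation matrix of the reversal of darts. -/
def dartSymmMatrix : Matrix G.Dart G.Dart R := of fun a b ↦ if a.symm = b then 1 else 0

/-- The Hashimoto (non-backtracking) matrix: the entry at `(a, b)` is `1` when the dart `b` may
follow the dart `a` in a non-backtracking walk. -/
def hashimotoMatrix : Matrix G.Dart G.Dart R :=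
  of fun a b ↦ if a.snd = b.fst ∧ a.symm ≠ b then 1 else 0

end Definitions

section EntrywiseNonneg

variable {R G} [Zero R] [One R] [Preorder R] [ZeroLEOneClass R]

lemma dartFstMatrix_apply_nonneg (u : V) (a : G.Dart) : 0 ≤ dartFstMatrix R G u a :=
  ite_nonneg zero_le_one le_rfl

lemma dartSndMatrix_apply_nonneg (a : G.Dart) (v : V) : 0 ≤ dartSndMatrix R G a v :=
  ite_nonneg zero_le_one le_rfl

lemma hashimotoMatrix_apply_nonneg (a b : G.Dart) : 0 ≤ hashimotoMatrix R G a b :=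
  ite_nonneg zero_le_one le_rfl

end EntrywiseNonneg

variable [Fintype V]

section Target

variable [NonAssocSemiring R]

lemma dartSndMatrix_mul {m : Type*} (M : Matrix V m R) :
    dartSndMatrix R G * M = M.submatrix (fun a ↦ a.snd) id := by
  ext a x
  simp [mul_apply, dartSndMatrix]

lemma dartSndMatrix_mul_dartFstMatrix :
    dartSndMatrix R G * dartFstMatrix R G = hashimotoMatrix R G + dartSymmMatrix R G := by
  rw [dartSndMatrix_mul]
  ext a b
  have hsnd : a.symm = b → b.fst = a.snd := by rintro rfl; rfl
  by_cases hba : a.symm = b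
  · simp [dartFstMatrix, hashimotoMatrix, dartSymmMatrix, hba, hsnd hba]
  · simp [dartFstMatrix, hashimotoMatrix, dartSymmMatrix, hba, eq_comm (a := a.snd)]

lemma dartSndMatrix_mulVec_one : dartSndMatrix R G *ᵥ 1 = 1 := by
  ext a
  simp [mulVec, dotProduct, dartSndMatrix]

end Target

variable [DecidableRel G.Adj]

section DartSums

variable [NonAssocSemiring R]

lemma dartSymmMatrix_mul {m : Type*} (M : Matrix G.Dart m R) :
    dartSymmMatrix R G * M = M.submatrix SimpleGraph.Dart.symm id := by
  ext a x
  simp [mul_apply, dartSymmMatrix]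

lemma dartSymmMatrix_mul_self : dartSymmMatrix R G * dartSymmMatrix R G = 1 := by
  rw [dartSymmMatrix_mul]
  ext a b
  simp [dartSymmMatrix, one_apply]

lemma dartSymmMatrix_mulVec_one : dartSymmMatrix R G *ᵥ 1 = 1 := by
  ext a
  simp [mulVec, dotProduct, dartSymmMatrix]

lemma dartFstMatrix_mul_dartSndMatrix :
    dartFstMatrix R G * dartSndMatrix R G = G.adjMatrix R := by
  ext u v
  simp only [mul_apply, dartFstMatrix, dartSndMatrix, of_apply, SimpleGraph.adjMatrix_apply,
    ite_zero_mul_ite_zero, mul_one]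
  split_ifs with huv
  · rw [Finset.sum_eq_single ⟨(u, v), huv⟩] <;>
      simp +contextual [SimpleGraph.Dart.ext_iff, Prod.ext_iff]
  · refine Finset.sum_eq_zero fun a _ ↦ if_neg ?_
    rintro ⟨rfl, rfl⟩
    exact huv a.adj

lemma dartFstMatrix_mul_dartSymmMatrix_mul_dartSndMatrix :
    dartFstMatrix R G * (dartSymmMatrix R G * dartSndMatrix R G) = G.degMatrix R := by
  rw [dartSymmMatrix_mul]
  ext u v
  simp only [mul_apply, dartFstMatrix, dartSndMatrix, of_apply, submatrix_apply, id_eq,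
    SimpleGraph.degMatrix, diagonal_apply, ite_zero_mul_ite_zero, mul_one]
  split_ifs with huv
  · subst huv
    simp [← G.dart_fst_fiber_card_eq_degree]
  · refine Finset.sum_eq_zero fun a _ ↦ if_neg ?_
    rintro ⟨hu, hv⟩
    exact huv (hu.symm.trans hv)

end DartSums

/-- The matrix whose `(u, v)` entry is the number of non-backtracking walks from `u` to `v` with
`n + 1` edges. Such a walk is a sequence of `n + 1` darts, hence the shift in the index. -/
def nonbacktrackingWalkMatrix [Semiring R] (n : ℕ) : Matrix V V R :=
  dartFstMatrix R G * hashimotoMatrix R G ^ n * dartSndMatrix R G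

/-- The matrix whose `(u, v)` entry is the number of non-backtracking walks from `u` to `v` with at
most `d` edges; the summand `1` counts the walks of length zero. -/
def nonbacktrackingBallMatrix [Semiring R] (d : ℕ) : Matrix V V R :=
  1 + ∑ n ∈ Finset.range d, nonbacktrackingWalkMatrix R G n

lemma nonbacktrackingBallMatrix_succ [Semiring R] (d : ℕ) :
    nonbacktrackingBallMatrix R G (d + 1) =
      nonbacktrackingBallMatrix R G d + nonbacktrackingWalkMatrix R G d := by
  simp only [nonbacktrackingBallMatrix, Finset.sum_range_succ, add_assoc]

lemma nonbacktrackingWalkMatrix_zero [Semiring R] :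
    nonbacktrackingWalkMatrix R G 0 = G.adjMatrix R := by
  rw [nonbacktrackingWalkMatrix, pow_zero, Matrix.mul_one, dartFstMatrix_mul_dartSndMatrix]

lemma adjMatrix_mul_nonbacktrackingWalkMatrix [Semiring R] (n : ℕ) :
    G.adjMatrix R * nonbacktrackingWalkMatrix R G n =
      nonbacktrackingWalkMatrix R G (n + 1) +
        dartFstMatrix R G * dartSymmMatrix R G * hashimotoMatrix R G ^ n * dartSndMatrix R G := by
  calc
    _ = dartFstMatrix R G * (dartSndMatrix R G * dartFstMatrix R G) * hashimotoMatrix R G ^ n *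
          dartSndMatrix R G := by
      simp only [nonbacktrackingWalkMatrix, ← dartFstMatrix_mul_dartSndMatrix, Matrix.mul_assoc]
    _ = _ := by
      simp only [nonbacktrackingWalkMatrix, dartSndMatrix_mul_dartFstMatrix, pow_succ',
        Matrix.mul_add, Matrix.add_mul, Matrix.mul_assoc]

section Regular

variable {G} {k : ℕ}

lemma degMatrix_eq_smul_one [NonAssocSemiring R] (hreg : G.IsRegularOfDegree k) :
    G.degMatrix R = (k : R) • 1 := by
  simp only [SimpleGraph.degMatrix, hreg.degree_eq, smul_one_eq_diagonal]

lemma dartFstMatrix_mulVec_one [Semiring R] (hreg : G.IsRegularOfDegree k) :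
    dartFstMatrix R G *ᵥ 1 = k • (1 : V → R) := by
  rw [← dartSndMatrix_mulVec_one, mulVec_mulVec, dartFstMatrix_mul_dartSndMatrix,
    adjMatrix_mulVec_one R hreg]

section Recursion

variable [Ring R]

lemma dartFstMatrix_mul_dartSymmMatrix_mul_hashimotoMatrix (hreg : G.IsRegularOfDegree k) :
    dartFstMatrix R G * dartSymmMatrix R G * hashimotoMatrix R G =
      (k - 1 : R) • dartFstMatrix R G := by
  calc
    _ = dartFstMatrix R G * dartSymmMatrix R G *
          (dartSndMatrix R G * dartFstMatrix R G - dartSymmMatrix R G) := by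
      rw [dartSndMatrix_mul_dartFstMatrix, add_sub_cancel_right]
    _ = dartFstMatrix R G * (dartSymmMatrix R G * dartSndMatrix R G) * dartFstMatrix R G -
          dartFstMatrix R G * (dartSymmMatrix R G * dartSymmMatrix R G) := by
      simp only [Matrix.mul_sub, Matrix.mul_assoc]
    _ = (k - 1 : R) • dartFstMatrix R G := by
      rw [dartFstMatrix_mul_dartSymmMatrix_mul_dartSndMatrix, dartSymmMatrix_mul_self,
        degMatrix_eq_smul_one R hreg, Matrix.smul_mul, Matrix.one_mul, Matrix.mul_one, sub_smul,
        one_smul]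

lemma nonbacktrackingWalkMatrix_one (hreg : G.IsRegularOfDegree k) :
    nonbacktrackingWalkMatrix R G 1 = G.adjMatrix R * G.adjMatrix R - (k : R) • 1 := by
  have h := adjMatrix_mul_nonbacktrackingWalkMatrix R G 0
  rw [nonbacktrackingWalkMatrix_zero, pow_zero, Matrix.mul_one, Matrix.mul_assoc,
    dartFstMatrix_mul_dartSymmMatrix_mul_dartSndMatrix, degMatrix_eq_smul_one R hreg] at h
  exact eq_sub_of_add_eq h.symm

lemma nonbacktrackingWalkMatrix_add_two (hreg : G.IsRegularOfDegree k) (n : ℕ) :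
    nonbacktrackingWalkMatrix R G (n + 2) =
      G.adjMatrix R * nonbacktrackingWalkMatrix R G (n + 1) -
        (k - 1 : R) • nonbacktrackingWalkMatrix R G n := by
  rw [adjMatrix_mul_nonbacktrackingWalkMatrix, pow_succ',
    ← Matrix.mul_assoc _ (hashimotoMatrix R G),
    dartFstMatrix_mul_dartSymmMatrix_mul_hashimotoMatrix R hreg, Matrix.smul_mul, Matrix.smul_mul,
    nonbacktrackingWalkMatrix, nonbacktrackingWalkMatrix, add_sub_cancel_right]

lemma nonbacktrackingBallMatrix_add_two (hreg : G.IsRegularOfDegree k) (d : ℕ) :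
    nonbacktrackingBallMatrix R G (d + 2) =
      G.adjMatrix R * nonbacktrackingBallMatrix R G (d + 1) -
        (k - 1 : R) • nonbacktrackingBallMatrix R G d := by
  induction d with
  | zero =>
    simp only [nonbacktrackingBallMatrix, Finset.sum_range_succ, Finset.sum_range_zero, zero_add,
      nonbacktrackingWalkMatrix_zero, nonbacktrackingWalkMatrix_one R hreg, mul_add, mul_one,
      add_zero, sub_smul, one_smul]
    abel
  | succ d ih =>
    calc
      _ = nonbacktrackingBallMatrix R G (d + 2) + nonbacktrackingWalkMatrix R G (d + 2) :=
        nonbacktrackingBallMatrix_succ R G (d + 2)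
      _ = G.adjMatrix R *
            (nonbacktrackingBallMatrix R G (d + 1) + nonbacktrackingWalkMatrix R G (d + 1)) -
          (k - 1 : R) • (nonbacktrackingBallMatrix R G d + nonbacktrackingWalkMatrix R G d) := by
        rw [ih, nonbacktrackingWalkMatrix_add_two R hreg, mul_add, smul_add, add_sub_add_comm]
      _ = _ := by simp only [← nonbacktrackingBallMatrix_succ]

end Recursion

lemma nonbacktrackingBallMatrix_mulVec_eq_Gpol_smul (hreg : G.IsRegularOfDegree k) {f : V → ℝ}
    {a : ℝ} (hf : G.adjMatrix ℝ *ᵥ f = a • f) (d : ℕ) :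
    nonbacktrackingBallMatrix ℝ G d *ᵥ f = Gpol k d a • f := by
  induction d using Nat.twoStepInduction with
  | zero => simp [nonbacktrackingBallMatrix, Gpol]
  | one =>
    simp [nonbacktrackingBallMatrix, nonbacktrackingWalkMatrix_zero, Gpol, add_mulVec, hf, add_smul,
      add_comm]
  | more d ih₀ ih₁ =>
    rw [nonbacktrackingBallMatrix_add_two ℝ hreg, sub_mulVec, ← mulVec_mulVec, ih₁, mulVec_smul, hf,
      smul_mulVec, ih₀, Gpol, sub_smul (a * _), smul_smul, smul_smul, mul_comm a]

section RowSums

variable [Ring R]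

lemma hashimotoMatrix_mulVec_one (hreg : G.IsRegularOfDegree k) :
    hashimotoMatrix R G *ᵥ 1 = (k - 1) • (1 : G.Dart → R) := by
  have hsum : hashimotoMatrix R G *ᵥ 1 + 1 = k • (1 : G.Dart → R) := by
    nth_rw 2 [← dartSymmMatrix_mulVec_one R G]
    rw [← add_mulVec, ← dartSndMatrix_mul_dartFstMatrix, ← mulVec_mulVec,
      dartFstMatrix_mulVec_one R hreg, mulVec_smul, dartSndMatrix_mulVec_one]
  ext a
  have hk : 1 ≤ k := hreg.degree_eq a.fst ▸ (G.degree_pos_iff_exists_adj _).2 ⟨a.snd, a.adj⟩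
  rw [eq_sub_of_add_eq hsum]
  simp [Nat.cast_sub hk]

lemma nonbacktrackingWalkMatrix_mulVec_one (hreg : G.IsRegularOfDegree k) (n : ℕ) :
    nonbacktrackingWalkMatrix R G n *ᵥ 1 = (k * (k - 1) ^ n) • (1 : V → R) := by
  have hpow : hashimotoMatrix R G ^ n *ᵥ 1 = (k - 1) ^ n • (1 : G.Dart → R) := by
    induction n with
    | zero => simp
    | succ n ih =>
      rw [pow_succ, ← mulVec_mulVec, hashimotoMatrix_mulVec_one R hreg, mulVec_smul, ih, smul_smul,
        pow_succ']
  rw [nonbacktrackingWalkMatrix, ← mulVec_mulVec, ← mulVec_mulVec, dartSndMatrix_mulVec_one, hpow,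
    mulVec_smul, dartFstMatrix_mulVec_one R hreg, smul_smul, mul_comm]

lemma nonbacktrackingBallMatrix_mulVec_one (hreg : G.IsRegularOfDegree k) (d : ℕ) :
    nonbacktrackingBallMatrix R G d *ᵥ 1 = mooreBound k d • (1 : V → R) := by
  simp only [nonbacktrackingBallMatrix, mooreBound, add_mulVec, one_mulVec, sum_mulVec,
    nonbacktrackingWalkMatrix_mulVec_one R hreg, add_smul, one_smul, Finset.sum_smul]

end RowSums

end Regular

section Order

variable {R G} [Semiring R] [PartialOrder R] [IsOrderedRing R]

lemma hashimotoMatrix_pow_mul_dartSndMatrix_apply_nonneg (n : ℕ) (a : G.Dart) (v : V) :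
    0 ≤ (hashimotoMatrix R G ^ n * dartSndMatrix R G) a v := by
  induction n generalizing a v with
  | zero => simpa using dartSndMatrix_apply_nonneg a v
  | succ n ih =>
    rw [pow_succ', Matrix.mul_assoc]
    exact matrix_mul_apply_nonneg hashimotoMatrix_apply_nonneg ih a v

lemma nonbacktrackingWalkMatrix_apply_nonneg (n : ℕ) (u v : V) :
    0 ≤ nonbacktrackingWalkMatrix R G n u v := by
  rw [nonbacktrackingWalkMatrix, Matrix.mul_assoc]
  exact matrix_mul_apply_nonneg dartFstMatrix_apply_nonneg
    (hashimotoMatrix_pow_mul_dartSndMatrix_apply_nonneg n) u v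

lemma one_le_hashimotoMatrix_pow_mul_dartSndMatrix_apply {n : ℕ} {a : G.Dart} {v : V}
    (hfst : G.edist a.fst v = (n + 1 : ℕ)) (hsnd : G.edist a.snd v = n) :
    1 ≤ (hashimotoMatrix R G ^ n * dartSndMatrix R G) a v := by
  induction n generalizing a with
  | zero =>
    have hav : a.snd = v := SimpleGraph.edist_eq_zero_iff.1 hsnd
    simp [dartSndMatrix, hav]
  | succ n ih =>
    obtain ⟨w, haw, hw⟩ := exists_adj_edist_eq_of_edist_eq_add_one hsnd
    let b : G.Dart := ⟨(a.snd, w), haw⟩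
    have hab : a.symm ≠ b := by
      intro h
      have hwa : a.fst = w := congrArg (fun e : G.Dart ↦ e.snd) h
      rw [hwa, hw, Nat.cast_inj] at hfst
      omega
    rw [pow_succ', Matrix.mul_assoc]
    refine one_le_matrix_mul_apply hashimotoMatrix_apply_nonneg
      (hashimotoMatrix_pow_mul_dartSndMatrix_apply_nonneg n) (j := b) ?_ (ih hsnd hw)
    simp [hashimotoMatrix, hab, b]

lemma one_le_nonbacktrackingWalkMatrix_apply {n : ℕ} {u v : V}
    (huv : G.edist u v = (n + 1 : ℕ)) : 1 ≤ nonbacktrackingWalkMatrix R G n u v := by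
  obtain ⟨w, huw, hw⟩ := exists_adj_edist_eq_of_edist_eq_add_one huv
  rw [nonbacktrackingWalkMatrix, Matrix.mul_assoc]
  exact one_le_matrix_mul_apply (j := ⟨(u, w), huw⟩) dartFstMatrix_apply_nonneg
    (hashimotoMatrix_pow_mul_dartSndMatrix_apply_nonneg n) (by simp [dartFstMatrix])
    (one_le_hashimotoMatrix_pow_mul_dartSndMatrix_apply huv hw)

lemma one_le_nonbacktrackingBallMatrix_apply {d : ℕ} {u v : V} (huv : G.edist u v ≤ d) :
    1 ≤ nonbacktrackingBallMatrix R G d u v := by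
  have hsum : ∀ s : Finset ℕ, 0 ≤ ∑ n ∈ s, nonbacktrackingWalkMatrix R G n u v := fun s ↦
    Finset.sum_nonneg fun n _ ↦ nonbacktrackingWalkMatrix_apply_nonneg n u v
  rw [nonbacktrackingBallMatrix, Matrix.add_apply, Matrix.sum_apply]
  obtain ⟨_ | n, hn, hnd⟩ := ENat.le_natCast_iff.1 huv
  · obtain rfl : u = v := SimpleGraph.edist_eq_zero_iff.1 hn
    simpa only [one_apply_eq] using le_add_of_nonneg_right (hsum (Finset.range d))
  · calc
      1 ≤ nonbacktrackingWalkMatrix R G n u v := one_le_nonbacktrackingWalkMatrix_apply hn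
      _ ≤ ∑ n ∈ Finset.range d, nonbacktrackingWalkMatrix R G n u v :=
        Finset.single_le_sum (fun m _ ↦ nonbacktrackingWalkMatrix_apply_nonneg m u v)
          (Finset.mem_range.2 hnd)
      _ ≤ (1 : Matrix V V R) u v + ∑ n ∈ Finset.range d, nonbacktrackingWalkMatrix R G n u v :=
        le_add_of_nonneg_left (ite_nonneg zero_le_one le_rfl)

end Order

end Nonbacktracking

lemma sum_norm_nonbacktrackingBallMatrix_sub_one {V : Type*} [Fintype V] [DecidableEq V]
    {G : SimpleGraph V} [DecidableRel G.Adj] {k d : ℕ} (hreg : G.IsRegularOfDegree k)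
    (hdiam : G.ediam ≤ d) (u : V) :
    ∑ v, ‖(nonbacktrackingBallMatrix ℝ G d - of 1 : Matrix V V ℝ) u v‖ =
      mooreBound k d - Fintype.card V := by
  have hrow : ∑ v, nonbacktrackingBallMatrix ℝ G d u v = mooreBound k d := by
    simpa [mulVec, dotProduct] using congrFun (nonbacktrackingBallMatrix_mulVec_one ℝ hreg d) u
  have hnorm (v : V) : ‖(nonbacktrackingBallMatrix ℝ G d - of 1 : Matrix V V ℝ) u v‖ =
      nonbacktrackingBallMatrix ℝ G d u v - 1 :=
    Real.norm_of_nonneg <| sub_nonneg.2 <|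
      one_le_nonbacktrackingBallMatrix_apply (SimpleGraph.edist_le_ediam.trans hdiam)
  simp only [hnorm, Finset.sum_sub_distrib, hrow, Finset.sum_const, Finset.card_univ, nsmul_one]

theorem stmt_6_general {k d : ℕ} {V : Type*} [Fintype V] {G : SimpleGraph V} [DecidableRel G.Adj]
    (hreg : G.IsRegularOfDegree k) (hdiam : G.ediam ≤ d) {lam : ℝ} (hlam : lam ≠ k) {f : V → ℝ}
    (hf₀ : f ≠ 0) (hf : G.adjMatrix ℝ *ᵥ f = lam • f) :
    |Gpol k d lam| ≤ (mooreBound k d : ℝ) - (Fintype.card V : ℝ) := by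
  classical
  have hone : 1 ᵥ* G.adjMatrix ℝ = (k : ℝ) • (1 : V → ℝ) := by
    rw [← mulVec_transpose, G.transpose_adjMatrix, adjMatrix_mulVec_one ℝ hreg,
      Nat.cast_smul_eq_nsmul]
  have hsum : 1 ⬝ᵥ f = 0 := dotProduct_eq_zero_of_mulVec_of_vecMul hf hone hlam
  have hJ : of 1 *ᵥ f = (0 : V → ℝ) := funext fun _ ↦ hsum
  have heig : (nonbacktrackingBallMatrix ℝ G d - of 1) *ᵥ f = Gpol k d lam • f := by
    rw [sub_mulVec, hJ, sub_zero, nonbacktrackingBallMatrix_mulVec_eq_Gpol_smul hreg hf]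
  exact norm_le_of_mulVec_eq_smul_of_sum_norm_le heig hf₀ fun u ↦
    (sum_norm_nonbacktrackingBallMatrix_sub_one hreg hdiam u).le

/-- If `Γ` is a finite connected `k`-regular graph (`k ≥ 3`) of diameter `d` on `n`
vertices with defect `δ = M(k,d) − n`, then every adjacency eigenvalue `λ ≠ k`
satisfies `|G_{k,d}(λ)| ≤ δ`. -/
theorem stmt_6 (k d : ℕ) (hk : 3 ≤ k)
    (V : Type*) [Fintype V] (G : SimpleGraph V) [DecidableRel G.Adj]
    (hconn : G.Connected) (hreg : G.IsRegularOfDegree k) (hdiam : G.diam = d)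
    (lam : ℝ) (hlam : lam ≠ (k : ℝ))
    (heig : ∃ v : V → ℝ, v ≠ 0 ∧ Matrix.mulVec (SimpleGraph.adjMatrix ℝ G) v = lam • v) :
    |Gpol k d lam| ≤ (mooreBound k d : ℝ) - (Fintype.card V : ℝ) := by
  obtain ⟨f, hf₀, hf⟩ := heig
  exact stmt_6_general hreg (ediam_eq_natCast_of_diam_eq hconn hdiam).le hlam hf₀ hf
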